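/- Let β < −2, d = 3, and for k ∈ ℤ^3 with |k| ≥ 4κ_g (κ_g ≥ 16) define K_β(|k|) = min{1, (2κ_g)^{−β}|k|^β}. Then there is a constant ϖ depending only on β and κ_g such that Σ'_{j∈ℤ^3\{0\}, j≠k} |k−j|^β |j|^{−1} K_β(|j|) ≤ ϖ K_β(|k|) for all k ∈ ℤ^3\{0\}. -/

import Mathlib

/-!
Since `min 1 (M |j|^β) ≤ M |j|^β` with `M = (2 κ_g)^{-β}`, and `min 1 (M |k|^β) ≥ |k|^β` because
`M ≥ 1` and `|k| ≥ 1`, it suffices to bound `∑ |k-j|^β |j|^{β-1}` by a constant times `|k|^β`.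
The larger of `|k-j|` and `|j|` is at least `|k|/2`; spending one factor with exponent `β` on it
leaves at most `|k-j|^{β-1} + |j|^{β-1}` (`weighted_product_le`). Both terms are summable over
`ℤ³` because `β - 1 < -3` (`summable_enorm3_rpow`), with sums independent of `k` by translation
invariance of the lattice.
-/

/-- Euclidean norm of a point of the integer lattice `ℤ³`. -/
noncomputable def enorm3 (k : Fin 3 → ℤ) : ℝ :=
  Real.sqrt (∑ i, ((k i : ℝ)) ^ 2)

/-- The vector of `EuclideanSpace ℝ (Fin 3)` with the same coordinates as a point of `ℤ³`. -/
noncomputable def toEuclidean3 (k : Fin 3 → ℤ) : EuclideanSpace ℝ (Fin 3) :=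
  WithLp.toLp 2 (fun i => (k i : ℝ))

lemma enorm3_eq_norm (k : Fin 3 → ℤ) : enorm3 k = ‖toEuclidean3 k‖ := by
  simp [enorm3, toEuclidean3, EuclideanSpace.norm_eq]

lemma toEuclidean3_injective : Function.Injective toEuclidean3 := by
  intro a b h
  funext i
  have h' := congrArg (fun v : EuclideanSpace ℝ (Fin 3) => v i) h
  simpa [toEuclidean3] using h'

lemma enorm3_le_add (k j : Fin 3 → ℤ) : enorm3 k ≤ enorm3 (k - j) + enorm3 j := by
  have h : toEuclidean3 k = toEuclidean3 (k - j) + toEuclidean3 j := by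
    ext i
    simp [toEuclidean3]
  simp only [enorm3_eq_norm]
  rw [h]
  exact norm_add_le _ _

lemma one_le_enorm3 {k : Fin 3 → ℤ} (hk : k ≠ 0) : 1 ≤ enorm3 k := by
  obtain ⟨i, hi⟩ := Function.ne_iff.mp hk
  have h1 : (1 : ℝ) ≤ (k i : ℝ) ^ 2 := by
    have : (1 : ℤ) ≤ (k i) ^ 2 := sq_pos_of_ne_zero hi
    exact_mod_cast this
  unfold enorm3
  rw [Real.one_le_sqrt]
  exact h1.trans (Finset.single_le_sum (f := fun i => ((k i : ℝ)) ^ 2)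
    (fun i _ => sq_nonneg _) (Finset.mem_univ i))

lemma summable_enorm3_rpow {r : ℝ} (hr : r < -3) :
    Summable fun j : Fin 3 → ℤ => enorm3 j ^ r := by
  let b := (EuclideanSpace.basisFun (Fin 3) ℝ).toBasis
  let L : Submodule ℤ (EuclideanSpace ℝ (Fin 3)) := Submodule.span ℤ (Set.range b)
  have hrank : Module.finrank ℤ L = 3 := by
    rw [ZLattice.rank ℝ L]
    simp
  have hs := ZLattice.summable_norm_rpow L r (by rw [hrank]; exact_mod_cast hr)
  have hmem (j : Fin 3 → ℤ) : toEuclidean3 j ∈ L := by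
    have : toEuclidean3 j = ∑ i, j i • b i := by
      ext i
      fin_cases i <;> simp [toEuclidean3, b, Fin.sum_univ_three]
    rw [this]
    exact Submodule.sum_mem _ fun i _ =>
      Submodule.smul_mem _ _ (Submodule.subset_span (Set.mem_range_self i))
  have hinj : Function.Injective fun j : Fin 3 → ℤ => (⟨toEuclidean3 j, hmem j⟩ : L) := by
    intro x y h
    exact toEuclidean3_injective (congrArg Subtype.val h)
  have := hs.comp_injective hinj
  refine this.congr fun j => ?_
  simp [enorm3_eq_norm]

/-- The pointwise form of the convolution estimate, with `a = |k - j|`, `b = |j|`, `c = |k|`. -/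
lemma weighted_product_le {β a b c : ℝ} (hβ : β < 0) (ha : 0 < a) (hb : 0 < b) (hc : 0 < c)
    (habc : c ≤ a + b) :
    a ^ β * b⁻¹ * b ^ β ≤ (c / 2) ^ β * (a ^ (β - 1) + b ^ (β - 1)) := by
  have ea : a ^ (β - 1) = a ^ β * a⁻¹ := by
    rw [Real.rpow_sub_one ha.ne', div_eq_mul_inv]
  have eb : b ^ (β - 1) = b ^ β * b⁻¹ := by
    rw [Real.rpow_sub_one hb.ne', div_eq_mul_inv]
  have hc2 : 0 < c / 2 := by positivity
  have pa : 0 ≤ a ^ (β - 1) := by positivity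
  have pb : 0 ≤ b ^ (β - 1) := by positivity
  rcases le_total b a with h | h
  · have h1 : a ^ β ≤ (c / 2) ^ β :=
      Real.rpow_le_rpow_of_nonpos hc2 (by linarith) hβ.le
    calc a ^ β * b⁻¹ * b ^ β = a ^ β * b ^ (β - 1) := by rw [eb]; ring
      _ ≤ (c / 2) ^ β * (a ^ (β - 1) + b ^ (β - 1)) := by
        gcongr
        linarith
  · have h1 : b ^ β ≤ (c / 2) ^ β :=
      Real.rpow_le_rpow_of_nonpos hc2 (by linarith) hβ.le
    have h2 : a ^ β * b⁻¹ ≤ a ^ (β - 1) := by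
      rw [ea]
      gcongr
    calc a ^ β * b⁻¹ * b ^ β ≤ a ^ (β - 1) * (c / 2) ^ β := by gcongr
      _ = (c / 2) ^ β * a ^ (β - 1) := mul_comm _ _
      _ ≤ (c / 2) ^ β * (a ^ (β - 1) + b ^ (β - 1)) := by
        gcongr
        linarith

theorem convolution_profile_estimate (β κg : ℝ) (hβ : β < -2) (hκg : 16 ≤ κg) :
    ∃ ϖ > (0:ℝ), ∀ k : Fin 3 → ℤ, k ≠ 0 →
      (∑' j : Fin 3 → ℤ,
          if j ≠ 0 ∧ j ≠ k then
            enorm3 (k - j) ^ β * (enorm3 j)⁻¹ *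
              min 1 ((2 * κg) ^ (-β) * enorm3 j ^ β)
          else 0) ≤
        ϖ * min 1 ((2 * κg) ^ (-β) * enorm3 k ^ β) := by
  have hnn (j : Fin 3 → ℤ) : 0 ≤ enorm3 j := Real.sqrt_nonneg _
  have hS : Summable fun j : Fin 3 → ℤ => enorm3 j ^ (β - 1) :=
    summable_enorm3_rpow (by linarith)
  set S := ∑' j : Fin 3 → ℤ, enorm3 j ^ (β - 1) with hSdef
  have hS0 : 0 ≤ S := tsum_nonneg fun j => Real.rpow_nonneg (hnn j) _
  set M := (2 * κg) ^ (-β) with hM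
  have hM1 : 1 ≤ M := Real.one_le_rpow (by linarith) (by linarith)
  have h2 : 0 < ((2 : ℝ) ^ β)⁻¹ := by positivity
  refine ⟨M * ((2 : ℝ) ^ β)⁻¹ * (2 * S + 1), by positivity, fun k hk => ?_⟩
  have hk1 := one_le_enorm3 hk
  have hprof : enorm3 k ^ β ≤ min 1 (M * enorm3 k ^ β) := by
    refine le_min (Real.rpow_le_one_of_one_le_of_nonpos hk1 (by linarith)) ?_
    exact le_mul_of_one_le_left (Real.rpow_nonneg (hnn k) _) hM1
  have hSk : Summable fun j : Fin 3 → ℤ => enorm3 (k - j) ^ (β - 1) :=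
    (Equiv.subLeft k).summable_iff.mpr hS
  have hSk' : ∑' j : Fin 3 → ℤ, enorm3 (k - j) ^ (β - 1) = S :=
    (Equiv.subLeft k).tsum_eq fun j => enorm3 j ^ (β - 1)
  have hmaj := (hSk.add hS).mul_left (M * (enorm3 k / 2) ^ β)
  have hterm (j : Fin 3 → ℤ) : (if j ≠ 0 ∧ j ≠ k then
        enorm3 (k - j) ^ β * (enorm3 j)⁻¹ * min 1 (M * enorm3 j ^ β) else 0) ≤
      M * (enorm3 k / 2) ^ β * (enorm3 (k - j) ^ (β - 1) + enorm3 j ^ (β - 1)) := by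
    have p1 := hnn k
    have p2 := hnn j
    have p3 := hnn (k - j)
    split_ifs with h
    · have hj := one_le_enorm3 h.1
      have hkj := one_le_enorm3 (sub_ne_zero.mpr h.2.symm)
      have hw := weighted_product_le (β := β) (by linarith) (zero_lt_one.trans_le hkj)
        (zero_lt_one.trans_le hj) (zero_lt_one.trans_le hk1) (enorm3_le_add k j)
      calc enorm3 (k - j) ^ β * (enorm3 j)⁻¹ * min 1 (M * enorm3 j ^ β)
          ≤ enorm3 (k - j) ^ β * (enorm3 j)⁻¹ * (M * enorm3 j ^ β) := by
            gcongr
            exact min_le_right _ _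
        _ = M * (enorm3 (k - j) ^ β * (enorm3 j)⁻¹ * enorm3 j ^ β) := by ring
        _ ≤ M * ((enorm3 k / 2) ^ β * (enorm3 (k - j) ^ (β - 1) + enorm3 j ^ (β - 1))) := by
            exact mul_le_mul_of_nonneg_left hw (by linarith)
        _ = _ := by ring
    · positivity
  have hterm0 (j : Fin 3 → ℤ) : 0 ≤ (if j ≠ 0 ∧ j ≠ k then
        enorm3 (k - j) ^ β * (enorm3 j)⁻¹ * min 1 (M * enorm3 j ^ β) else 0) := by
    have p2 := hnn j
    have p3 := hnn (k - j)
    split_ifs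
    · positivity
    · exact le_rfl
  have hk0 : 0 ≤ enorm3 k ^ β := Real.rpow_nonneg (hnn k) _
  calc _ ≤ ∑' j : Fin 3 → ℤ,
        M * (enorm3 k / 2) ^ β * (enorm3 (k - j) ^ (β - 1) + enorm3 j ^ (β - 1)) :=
        (Summable.of_nonneg_of_le hterm0 hterm hmaj).tsum_le_tsum hterm hmaj
    _ = M * ((2 : ℝ) ^ β)⁻¹ * (2 * S) * enorm3 k ^ β := by
        rw [tsum_mul_left, hSk.tsum_add hS, hSk', ← hSdef,
          Real.div_rpow (hnn k) zero_le_two]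
        ring
    _ ≤ M * ((2 : ℝ) ^ β)⁻¹ * (2 * S + 1) * min 1 (M * enorm3 k ^ β) := by
        gcongr
        linarith
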